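/- arXiv:1402.0299 — 9 statements merged into one kernel-verified Lean document; each statement's English description precedes it below -/
import Mathlib

section
/- Let α < κ and suppose y = ⨆_α X, where X ⊆ (x]_α for some x ∈ L. Then y is the ≤-least element of [y]_α (i.e., y ∈ [y]_α and y ≤ z for all z ∈ [y]_α), and y is a ⊑_{α+1}-least element of [y]_α (i.e., y ⊑_{α+1} z for all z ∈ [y]_α, where this is interpreted as reading α+1 in place of α when α+1 < κ; here assume α+1 < κ). -/
/-- `x =_α y` : the equivalence determined by the preorder `⊑_α`. -/
def eqa {L : Type*} (sq : Ordinal → L → L → Prop) (α : Ordinal) (x y : L) : Prop :=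
  sq α x y ∧ sq α y x

/-- `x ⊏_α y` : `x ⊑_α y` but not `x =_α y`. -/
def sqlt {L : Type*} (sq : Ordinal → L → L → Prop) (α : Ordinal) (x y : L) : Prop :=
  sq α x y ∧ ¬ eqa sq α x y

/-- `x ⊑ y` : `x ⊏_α y` for some `α < κ`, or `x = y`. -/
def sqle {L : Type*} (sq : Ordinal → L → L → Prop) (κ : Ordinal) (x y : L) : Prop :=
  (∃ α < κ, sqlt sq α x y) ∨ x = y

/-- `(x]_α = {y | ∀ β < α, x =_β y}`. -/
def seg {L : Type*} (sq : Ordinal → L → L → Prop) (α : Ordinal) (x : L) : Set L :=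
  {y | ∀ β < α, eqa sq β x y}

/-- `[x]_α = {y | x =_α y ∧ ∀ β < α, x =_β y}`. -/
def segcl {L : Type*} (sq : Ordinal → L → L → Prop) (α : Ordinal) (x : L) : Set L :=
  {y | eqa sq α x y ∧ ∀ β < α, eqa sq β x y}

/-- `y = ⨆_α X` (for `X ⊆ (x]_α`): the element specified by Axiom 3. -/
def IsLubA {L : Type*} [LE L] (sq : Ordinal → L → L → Prop) (α : Ordinal) (x : L)
    (X : Set L) (y : L) : Prop :=
  y ∈ seg sq α x ∧ (∀ z ∈ X, sq α z y) ∧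
    ∀ w ∈ seg sq α x, (∀ z ∈ X, sq α z w) → sq α y w ∧ y ≤ w

theorem stmt_6
    {L : Type*} [CompleteLattice L] {κ : Ordinal} (hκ : Order.IsSuccLimit κ)
    (sq : Ordinal → L → L → Prop)
    (hrefl : ∀ α < κ, ∀ x : L, sq α x x)
    (htrans : ∀ α < κ, ∀ x y z : L, sq α x y → sq α y z → sq α x z)
    (ax1 : ∀ α β : Ordinal, α < β → β < κ → ∀ x y : L, sq β x y → eqa sq α x y)
    (ax2 : ∀ x y : L, (∀ α < κ, eqa sq α x y) → x = y)
    (ax3 : ∀ x : L, ∀ α < κ, ∀ X ⊆ seg sq α x, ∃ y : L, IsLubA sq α x X y)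
    (ax4 : ∀ X : Set L, X.Nonempty → ∀ α < κ, ∀ y : L,
      (∀ x ∈ X, eqa sq α y x) → eqa sq α y (sSup X))
    {α : Ordinal} (hα : α < κ) {x y : L} {X : Set L}
    (hX : X ⊆ seg sq α x) (hy : IsLubA sq α x X y) :
    y ∈ segcl sq α y ∧ (∀ z ∈ segcl sq α y, y ≤ z) ∧
      (∀ z ∈ segcl sq α y, sq (α + 1) y z) := by
  have hsucc : α + 1 < κ := by
    simpa using hκ.succ_lt hα
  have hle : ∀ z ∈ segcl sq α y, y ≤ z := by
    intro z hz
    refine (hy.2.2 z ?_ ?_).2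
    · intro β hβ
      have hβκ := hβ.trans hα
      have h1 := hy.1 β hβ
      have h2 := hz.2 β hβ
      exact ⟨htrans β hβκ _ _ _ h1.1 h2.1, htrans β hβκ _ _ _ h2.2 h1.2⟩
    · intro w hw
      exact htrans α hα _ _ _ (hy.2.1 w hw) hz.1.1
  have hseg : ∀ z, z ∈ segcl sq α y ↔ z ∈ seg sq (α + 1) y := by
    intro z
    constructor
    · intro hz β hβ
      rcases (Order.lt_add_one_iff.mp hβ).lt_or_eq with h | h
      · exact hz.2 β h
      · exact h ▸ hz.1
    · intro hz
      have hlt : α < α + 1 := Order.lt_add_one_iff.mpr le_rfl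
      exact ⟨hz α hlt, fun β hβ => hz β (hβ.trans hlt)⟩
  have hself : y ∈ segcl sq α y :=
    ⟨⟨hrefl α hα y, hrefl α hα y⟩,
      fun β hβ => ⟨hrefl β (hβ.trans hα) y, hrefl β (hβ.trans hα) y⟩⟩
  refine ⟨hself, hle, ?_⟩
  obtain ⟨u, hu1, -, hu3⟩ := ax3 y (α + 1) hsucc ∅ (Set.empty_subset _)
  have huy : u = y :=
    le_antisymm (hu3 y ((hseg y).1 hself) (by simp)).2 (hle u ((hseg u).2 hu1))
  intro z hz
  have h := (hu3 z ((hseg z).1 hz) (by simp)).1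
  rwa [huy] at h
end

section
/- For every x ∈ L and ordinal α with α+1 < κ, the slice y = x|_α = ⨆_α {x} satisfies: y =_α x (so [y]_α = [x]_α), y is the ≤-least element of [x]_α, and y ⊑_{α+1} z for all z ∈ [x]_α. -/
theorem stmt_8
    {L : Type*} [CompleteLattice L] {κ : Ordinal} (hκ : Order.IsSuccLimit κ)
    (sq : Ordinal → L → L → Prop)
    (hrefl : ∀ α < κ, ∀ x : L, sq α x x)
    (htrans : ∀ α < κ, ∀ x y z : L, sq α x y → sq α y z → sq α x z)
    (ax1 : ∀ α β : Ordinal, α < β → β < κ → ∀ x y : L, sq β x y → eqa sq α x y)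
    (ax2 : ∀ x y : L, (∀ α < κ, eqa sq α x y) → x = y)
    (ax3 : ∀ x : L, ∀ α < κ, ∀ X ⊆ seg sq α x, ∃ y : L, IsLubA sq α x X y)
    (ax4 : ∀ X : Set L, X.Nonempty → ∀ α < κ, ∀ y : L,
      (∀ x ∈ X, eqa sq α y x) → eqa sq α y (sSup X))
    {α : Ordinal} (hα : α < κ) {x y : L}
    (hy : IsLubA sq α x {x} y) :
    eqa sq α x y ∧ y ∈ segcl sq α x ∧ (∀ z ∈ segcl sq α x, y ≤ z) ∧
      (∀ z ∈ segcl sq α x, sq (α + 1) y z) := by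
  obtain ⟨hys, hyx, hyl⟩ := hy
  have hxy : sq α x y := hyx x rfl
  have hxs : x ∈ seg sq α x := fun β hβ =>
    ⟨hrefl β (hβ.trans hα) x, hrefl β (hβ.trans hα) x⟩
  have hyx' : sq α y x := (hyl x hxs (by rintro z rfl; exact hrefl α hα z)).1
  have hle : ∀ z ∈ segcl sq α x, y ≤ z := fun z hz =>
    (hyl z hz.2 (by rintro w rfl; exact hz.1.1)).2
  have hsucc : ∀ z, z ∈ segcl sq α x ↔ z ∈ seg sq (α + 1) x := by
    intro z
    constructor
    · intro hz β hβ
      rcases (Order.lt_add_one_iff.mp hβ).lt_or_eq with h | h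
      · exact hz.2 β h
      · exact h ▸ hz.1
    · intro hz
      exact ⟨hz α (Order.lt_add_one_iff.mpr le_rfl),
        fun β hβ => hz β (hβ.trans (Order.lt_add_one_iff.mpr le_rfl))⟩
  have hycl : y ∈ segcl sq α x := ⟨⟨hxy, hyx'⟩, hys⟩
  have hα1 : α + 1 < κ := by
    rw [← Order.succ_eq_add_one]
    exact hκ.succ_lt hα
  obtain ⟨u, hus, -, hul⟩ := ax3 x (α + 1) hα1 ∅ (Set.empty_subset _)
  have huy : u = y := le_antisymm (hul y ((hsucc y).1 hycl) (by simp)).2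
    (hle u ((hsucc u).2 hus))
  subst huy
  exact ⟨⟨hxy, hyx'⟩, hycl, hle, fun z hz => (hul z ((hsucc z).1 hz) (by simp)).1⟩
end

section
/- For every x ∈ L, x equals the least upper bound (with respect to ≤) of the family of its slices: x = ⋁_{α < κ} x|_α. -/
theorem stmt_11
    {L : Type*} [CompleteLattice L] {κ : Ordinal} (hκ : Order.IsSuccLimit κ)
    (sq : Ordinal → L → L → Prop)
    (hrefl : ∀ α < κ, ∀ x : L, sq α x x)
    (htrans : ∀ α < κ, ∀ x y z : L, sq α x y → sq α y z → sq α x z)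
    (ax1 : ∀ α β : Ordinal, α < β → β < κ → ∀ x y : L, sq β x y → eqa sq α x y)
    (ax2 : ∀ x y : L, (∀ α < κ, eqa sq α x y) → x = y)
    (ax3 : ∀ x : L, ∀ α < κ, ∀ X ⊆ seg sq α x, ∃ y : L, IsLubA sq α x X y)
    (ax4 : ∀ X : Set L, X.Nonempty → ∀ α < κ, ∀ y : L,
      (∀ x ∈ X, eqa sq α y x) → eqa sq α y (sSup X))
    (sl : Ordinal → L → L)
    (hsl : ∀ α < κ, ∀ x : L, IsLubA sq α x {x} (sl α x)) :
    ∀ x : L, x = sSup ((fun α => sl α x) '' Set.Iio κ) := by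
  intro x
  have hself : ∀ α < κ, x ∈ seg sq α x := fun α hα β hβ =>
    ⟨hrefl β (hβ.trans hα) x, hrefl β (hβ.trans hα) x⟩
  have heq : ∀ α < κ, eqa sq α x (sl α x) := by
    intro α hα
    obtain ⟨_, h2, h3⟩ := hsl α hα x
    refine ⟨h2 x rfl, (h3 x (hself α hα) ?_).1⟩
    rintro z rfl
    exact hrefl α hα z
  have heq' : ∀ α β, α ≤ β → β < κ → eqa sq α x (sl β x) := by
    intro α β hab hβ
    rcases hab.eq_or_lt with rfl | hlt
    · exact heq α hβ
    · exact (hsl β hβ x).1 α hlt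
  have hmono : ∀ α β, α ≤ β → β < κ → sl α x ≤ sl β x := by
    intro α β hab hβ
    refine ((hsl α (hab.trans_lt hβ) x).2.2 (sl β x) ?_ ?_).2
    · intro γ hγ
      exact heq' γ β (hγ.le.trans hab) hβ
    · rintro z rfl
      exact (heq' α β hab hβ).1
  apply ax2
  intro α hα
  have hs : sSup ((fun α => sl α x) '' Set.Iio κ) = sSup ((fun α => sl α x) '' Set.Ico α κ) := by
    apply le_antisymm
    · apply sSup_le
      rintro _ ⟨β, hβ, rfl⟩
      have hm : max α β < κ := max_lt hα hβ
      exact (hmono β (max α β) (le_max_right _ _) hm).trans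
        (le_sSup ⟨max α β, ⟨le_max_left _ _, hm⟩, rfl⟩)
    · exact sSup_le_sSup (Set.image_mono fun β hβ => hβ.2)
  rw [hs]
  refine ax4 ((fun α => sl α x) '' Set.Ico α κ) ⟨sl α x, α, ⟨le_rfl, hα⟩, rfl⟩ α hα x ?_
  rintro _ ⟨β, hβ, rfl⟩
  exact heq' α β hβ.1 hβ.2
end

section
/- For all x, y ∈ L: x ≤ y iff x|_α ≤ y for all α < κ. Moreover, if for all α < κ there is some β < κ with x|_α ≤ y|_β, then x ≤ y; in particular, if x|_α ≤ y|_α for all α < κ, then x ≤ y. -/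
theorem stmt_12
    {L : Type*} [CompleteLattice L] {κ : Ordinal} (hκ : Order.IsSuccLimit κ)
    (sq : Ordinal → L → L → Prop)
    (hrefl : ∀ α < κ, ∀ x : L, sq α x x)
    (htrans : ∀ α < κ, ∀ x y z : L, sq α x y → sq α y z → sq α x z)
    (ax1 : ∀ α β : Ordinal, α < β → β < κ → ∀ x y : L, sq β x y → eqa sq α x y)
    (ax2 : ∀ x y : L, (∀ α < κ, eqa sq α x y) → x = y)
    (ax3 : ∀ x : L, ∀ α < κ, ∀ X ⊆ seg sq α x, ∃ y : L, IsLubA sq α x X y)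
    (ax4 : ∀ X : Set L, X.Nonempty → ∀ α < κ, ∀ y : L,
      (∀ x ∈ X, eqa sq α y x) → eqa sq α y (sSup X))
    (sl : Ordinal → L → L)
    (hsl : ∀ α < κ, ∀ x : L, IsLubA sq α x {x} (sl α x)) :
    ∀ x y : L,
      (x ≤ y ↔ ∀ α < κ, sl α x ≤ y) ∧
      ((∀ α < κ, ∃ β < κ, sl α x ≤ sl β y) → x ≤ y) ∧
      ((∀ α < κ, sl α x ≤ sl α y) → x ≤ y) := by
  have hself : ∀ α < κ, ∀ x : L, x ∈ seg sq α x := fun α hα x β hβ =>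
    ⟨hrefl β (hβ.trans hα) x, hrefl β (hβ.trans hα) x⟩
  have hle : ∀ α < κ, ∀ x : L, sq α (sl α x) x ∧ sl α x ≤ x := fun α hα x =>
    (hsl α hα x).2.2 x (hself α hα x) (by
      intro z hz
      rw [Set.mem_singleton_iff.1 hz]
      exact hrefl α hα x)
  have heq : ∀ β < κ, ∀ x : L, ∀ α ≤ β, eqa sq α x (sl β x) := by
    intro β hβ x α hα
    rcases hα.eq_or_lt with rfl | h
    · exact ⟨(hsl α hβ x).2.1 x rfl, (hle α hβ x).1⟩
    · exact (hsl β hβ x).1 α h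
  have hmono : ∀ β < κ, ∀ x : L, ∀ α ≤ β, sl α x ≤ sl β x := by
    intro β hβ x α hα
    refine ((hsl α (hα.trans_lt hβ) x).2.2 (sl β x)
      (fun γ hγ => heq β hβ x γ (hγ.le.trans hα)) ?_).2
    intro z hz
    rw [Set.mem_singleton_iff.1 hz]
    exact (heq β hβ x α hα).1
  have hsup : ∀ x : L, x = sSup {z | ∃ β < κ, z = sl β x} := by
    intro x
    apply ax2
    intro α hα
    have h1 : sSup {z | ∃ β < κ, z = sl β x} = sSup {z | ∃ β < κ, α ≤ β ∧ z = sl β x} := by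
      apply le_antisymm
      · apply sSup_le
        rintro z ⟨β, hβ, rfl⟩
        have hm : max α β < κ := max_lt hα hβ
        exact (hmono _ hm x β (le_max_right _ _)).trans
          (le_sSup ⟨max α β, hm, le_max_left _ _, rfl⟩)
      · apply sSup_le_sSup
        rintro z ⟨β, hβ, _, rfl⟩
        exact ⟨β, hβ, rfl⟩
    rw [h1]
    refine ax4 {z | ∃ β < κ, α ≤ β ∧ z = sl β x} ⟨sl α x, α, hα, le_rfl, rfl⟩ α hα x ?_
    rintro z ⟨β, hβ, hαβ, rfl⟩
    exact heq β hβ x α hαβ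
  have main : ∀ x y : L, (∀ α < κ, sl α x ≤ y) → x ≤ y := by
    intro x y h
    rw [hsup x]
    apply sSup_le
    rintro z ⟨β, hβ, rfl⟩
    exact h β hβ
  intro x y
  refine ⟨⟨fun h α hα => (hle α hα x).2.trans h, main x y⟩, fun h => main x y ?_,
    fun h => main x y fun α hα => (h α hα).trans (hle α hα y).2⟩
  intro α hα
  obtain ⟨β, hβ, h'⟩ := h α hα
  exact h'.trans (hle β hβ y).2
end

section
/- Suppose (x_α)_{α<κ} is a compatible sequence and let x = ⋁_{α<κ} x_α. Then x|_α = x_α for all α < κ. -/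
theorem stmt_14
    {L : Type*} [CompleteLattice L] {κ : Ordinal} (hκ : Order.IsSuccLimit κ)
    (sq : Ordinal → L → L → Prop)
    (hrefl : ∀ α < κ, ∀ x : L, sq α x x)
    (htrans : ∀ α < κ, ∀ x y z : L, sq α x y → sq α y z → sq α x z)
    (ax1 : ∀ α β : Ordinal, α < β → β < κ → ∀ x y : L, sq β x y → eqa sq α x y)
    (ax2 : ∀ x y : L, (∀ α < κ, eqa sq α x y) → x = y)
    (ax3 : ∀ x : L, ∀ α < κ, ∀ X ⊆ seg sq α x, ∃ y : L, IsLubA sq α x X y)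
    (ax4 : ∀ X : Set L, X.Nonempty → ∀ α < κ, ∀ y : L,
      (∀ x ∈ X, eqa sq α y x) → eqa sq α y (sSup X))
    (xs : Ordinal → L)
    (hleast : ∀ α < κ, ∀ z ∈ segcl sq α (xs α), xs α ≤ z)
    (hcompat : ∀ α β : Ordinal, α < β → β < κ → eqa sq α (xs α) (xs β)) :
    ∀ α < κ, ∀ s : L,
      IsLubA sq α (sSup (xs '' Set.Iio κ)) {sSup (xs '' Set.Iio κ)} s → s = xs α := by
  have hcl : ∀ α < κ, ∀ u v : L, eqa sq α u v → v ∈ segcl sq α u := fun α hα u v h =>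
    ⟨h, fun β hβ => ax1 β α hβ hα u v h.1⟩
  intro α hα s hs
  have hmono : ∀ β, α ≤ β → β < κ → xs α ≤ xs β := by
    intro β hαβ hβ
    rcases hαβ.eq_or_lt with h | h
    · rw [h]
    · exact hleast α hα _ (hcl α hα _ _ (hcompat α β h hβ))
  have hsup : sSup (xs '' Set.Iio κ) = sSup (xs '' Set.Ico α κ) := by
    apply le_antisymm
    · apply sSup_le
      rintro _ ⟨β, hβ, rfl⟩
      rcases le_or_gt α β with h | h
      · exact le_sSup ⟨β, ⟨h, hβ⟩, rfl⟩
      · exact (hleast β hβ _ (hcl β hβ _ _ (hcompat β α h hα))).trans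
          (le_sSup ⟨α, ⟨le_rfl, hα⟩, rfl⟩)
    · apply sSup_le_sSup
      rintro _ ⟨β, hβ, rfl⟩
      exact ⟨β, hβ.2, rfl⟩
  have hx : eqa sq α (xs α) (sSup (xs '' Set.Iio κ)) := by
    rw [hsup]
    refine ax4 (xs '' Set.Ico α κ) ⟨_, α, ⟨le_rfl, hα⟩, rfl⟩ α hα _ ?_
    rintro _ ⟨β, ⟨h, hβ⟩, rfl⟩
    rcases h.eq_or_lt with h | h
    · rw [← h]
      exact ⟨hrefl α hα _, hrefl α hα _⟩
    · exact hcompat α β h hβ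
  obtain ⟨-, hs2, hs3⟩ := hs
  have h1 := hs2 _ rfl
  have h2 := hs3 (xs α) (fun β hβ => ax1 β α hβ hα _ _ hx.2)
    (by rintro z rfl; exact hx.2)
  exact le_antisymm h2.2 (hleast α hα _ (hcl α hα _ _ ⟨htrans α hα _ _ _ hx.1 h1, h2.1⟩))
end

section
/- Suppose (x_β)_{β<α}, with α ≤ κ, is a partial compatible sequence and x = ⋁_{β<α} x_β. If z ∈ L satisfies x_β ⊑_β z for all β < α, then x ⊑ z. -/
theorem stmt_15
    {L : Type*} [CompleteLattice L] {κ : Ordinal} (hκ : Order.IsSuccLimit κ)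
    (sq : Ordinal → L → L → Prop)
    (hrefl : ∀ α < κ, ∀ x : L, sq α x x)
    (htrans : ∀ α < κ, ∀ x y z : L, sq α x y → sq α y z → sq α x z)
    (ax1 : ∀ α β : Ordinal, α < β → β < κ → ∀ x y : L, sq β x y → eqa sq α x y)
    (ax2 : ∀ x y : L, (∀ α < κ, eqa sq α x y) → x = y)
    (ax3 : ∀ x : L, ∀ α < κ, ∀ X ⊆ seg sq α x, ∃ y : L, IsLubA sq α x X y)
    (ax4 : ∀ X : Set L, X.Nonempty → ∀ α < κ, ∀ y : L,
      (∀ x ∈ X, eqa sq α y x) → eqa sq α y (sSup X))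
    {α : Ordinal} (hα : α ≤ κ) (xs : Ordinal → L)
    (hleast : ∀ β < α, ∀ z ∈ segcl sq β (xs β), xs β ≤ z)
    (hcompat : ∀ β γ : Ordinal, β < γ → γ < α → eqa sq β (xs β) (xs γ))
    {z : L} (hz : ∀ β < α, sq β (xs β) z) :
    sqle sq κ (sSup (xs '' Set.Iio α)) z := by
  have hle : ∀ β : Ordinal, β < α → ∀ y, eqa sq β (xs β) y → xs β ≤ y := by
    intro β hβ y h
    exact hleast β hβ y ⟨h, fun δ hδ => ax1 δ β hδ (hβ.trans_le hα) _ _ h.1⟩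
  have hx : ∀ β < α, eqa sq β (xs β) (sSup (xs '' Set.Iio α)) := by
    intro β hβ
    have hβκ := hβ.trans_le hα
    have e : sSup (xs '' Set.Iio α) = sSup (xs '' Set.Ico β α) := by
      apply le_antisymm
      · apply sSup_le
        rintro _ ⟨γ, hγ, rfl⟩
        rcases lt_or_ge γ β with h | h
        · exact (hle γ hγ _ (hcompat γ β h hβ)).trans
            (le_sSup ⟨β, ⟨le_refl _, hβ⟩, rfl⟩)
        · exact le_sSup ⟨γ, ⟨h, hγ⟩, rfl⟩
      · exact sSup_le_sSup (Set.image_mono fun γ hγ => hγ.2)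
    rw [e]
    refine ax4 (xs '' Set.Ico β α) ⟨xs β, β, ⟨le_refl _, hβ⟩, rfl⟩ β hβκ _ ?_
    rintro _ ⟨γ, ⟨h1, h2⟩, rfl⟩
    rcases h1.eq_or_lt with rfl | h
    · exact ⟨hrefl _ hβκ _, hrefl _ hβκ _⟩
    · exact hcompat β γ h h2
  generalize hX : sSup (xs '' Set.Iio α) = x at hx ⊢
  by_cases hall : ∀ γ < κ, eqa sq γ x z
  · exact Or.inr (ax2 _ _ hall)
  left
  push Not at hall
  obtain ⟨γ, ⟨hγ, hne⟩, hmin⟩ := WellFounded.has_min (wellFounded_lt (α := Ordinal))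
    {γ | γ < κ ∧ ¬ eqa sq γ x z} hall
  refine ⟨γ, hγ, ?_, hne⟩
  have hlt : ∀ δ < γ, eqa sq δ x z := by
    intro δ hδ
    by_contra h
    exact hmin δ ⟨hδ.trans hγ, h⟩ hδ
  rcases lt_or_ge γ α with h | h
  · exact htrans γ hγ _ _ _ (hx γ h).2 (hz γ h)
  · obtain ⟨y, hy, -, hyl⟩ := ax3 x γ hγ ∅ (Set.empty_subset _)
    have h1 : y ≤ x := (hyl x (fun δ hδ => ⟨hrefl _ (hδ.trans hγ) _, hrefl _ (hδ.trans hγ) _⟩)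
      (by simp)).2
    have h2 : x ≤ y := by
      rw [← hX]
      apply sSup_le
      rintro _ ⟨β, hβ, rfl⟩
      have hβ' : β < α := hβ
      have hk := hβ'.trans_le hα
      have a := hx β hβ
      have b := hy β (hβ'.trans_le h)
      exact hle β hβ _ ⟨htrans β hk _ _ _ a.1 b.1, htrans β hk _ _ _ b.2 a.2⟩
    obtain rfl := le_antisymm h1 h2
    exact (hyl z hlt (by simp)).1
end

section
/- The partially ordered set (L, ⊑) is a complete lattice: ⊥ is the ⊑-least element of L, and every nonempty subset X ⊆ L has a least upper bound in L with respect to ⊑. -/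
theorem stmt_16
    {L : Type*} [CompleteLattice L] {κ : Ordinal} (hκ : Order.IsSuccLimit κ)
    (sq : Ordinal → L → L → Prop)
    (hrefl : ∀ α < κ, ∀ x : L, sq α x x)
    (htrans : ∀ α < κ, ∀ x y z : L, sq α x y → sq α y z → sq α x z)
    (ax1 : ∀ α β : Ordinal, α < β → β < κ → ∀ x y : L, sq β x y → eqa sq α x y)
    (ax2 : ∀ x y : L, (∀ α < κ, eqa sq α x y) → x = y)
    (ax3 : ∀ x : L, ∀ α < κ, ∀ X ⊆ seg sq α x, ∃ y : L, IsLubA sq α x X y)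
    (ax4 : ∀ X : Set L, X.Nonempty → ∀ α < κ, ∀ y : L,
      (∀ x ∈ X, eqa sq α y x) → eqa sq α y (sSup X)) :
    (∀ x : L, sqle sq κ ⊥ x) ∧
      ∀ X : Set L, X.Nonempty →
        ∃ s : L, (∀ x ∈ X, sqle sq κ x s) ∧
          ∀ z : L, (∀ x ∈ X, sqle sq κ x z) → sqle sq κ s z := by
  have esymm : ∀ α (x y : L), eqa sq α x y → eqa sq α y x := fun α x y h => ⟨h.2, h.1⟩
  have etrans : ∀ α < κ, ∀ x y z : L, eqa sq α x y → eqa sq α y z → eqa sq α x z :=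
    fun α h x y z h1 h2 => ⟨htrans α h _ _ _ h1.1 h2.1, htrans α h _ _ _ h2.2 h1.2⟩
  have erefl : ∀ α < κ, ∀ x : L, eqa sq α x x := fun α h x => ⟨hrefl α h x, hrefl α h x⟩
  have emono : ∀ α β, α ≤ β → β < κ → ∀ x y : L, eqa sq β x y → eqa sq α x y := by
    intro α β hab hb x y h
    rcases hab.eq_or_lt with rfl | hlt
    · exact h
    · exact ax1 α β hlt hb x y h.1
  have least : ∀ x y : L, x ≠ y → ∃ α < κ, ¬ eqa sq α x y ∧ ∀ β < α, eqa sq β x y := by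
    intro x y hxy
    have hex : ∃ α, α < κ ∧ ¬ eqa sq α x y := by
      by_contra hcon
      push Not at hcon
      exact hxy (ax2 x y hcon)
    obtain ⟨α, ⟨h1, h2⟩, hmin⟩ :=
      WellFounded.has_min (wellFounded_lt (α := Ordinal)) {α | α < κ ∧ ¬ eqa sq α x y} hex
    refine ⟨α, h1, h2, fun β hb => ?_⟩
    by_contra hn
    exact hmin β ⟨hb.trans h1, hn⟩ hb
  refine ⟨?_, ?_⟩
  · intro x
    by_cases hx : (⊥ : L) = x
    · exact Or.inr hx
    obtain ⟨α, h1, h2, h3⟩ := least _ _ hx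
    obtain ⟨y, hy1, hy2, hy3⟩ := ax3 ⊥ α h1 ∅ (Set.empty_subset _)
    have hb := (hy3 ⊥ (fun β hb => erefl β (hb.trans h1) _) (by simp)).2
    have hy : y = ⊥ := le_bot_iff.mp hb
    subst hy
    exact Or.inl ⟨α, h1, (hy3 x h3 (by simp)).1, h2⟩
  -- gluing of compatible families
  have glue : ∀ α ≤ κ, ∀ x : Ordinal → L, (∀ β γ, β < γ → γ < α → eqa sq β (x β) (x γ)) →
      ∃ u, ∀ β < α, eqa sq β (x β) u := by
    intro α hα x hx
    have h0 : ∀ β, ∃ y : L, β < κ →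
        eqa sq β (x β) y ∧ ∀ w, eqa sq β (x β) w → y ≤ w := by
      intro β
      by_cases hb : β < κ
      · obtain ⟨y, hy1, hy2, hy3⟩ := ax3 (x β) β hb {x β} (by
          rintro z rfl γ hγ
          exact erefl γ (hγ.trans hb) _)
        refine ⟨y, fun _ => ⟨⟨hy2 _ rfl, ?_⟩, fun w hw => ?_⟩⟩
        · refine (hy3 (x β) (fun γ hγ => erefl γ (hγ.trans hb) _) ?_).1
          rintro z rfl
          exact hrefl β hb _
        · refine (hy3 w (fun γ hγ => emono γ β hγ.le hb _ _ hw) ?_).2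
          rintro z rfl
          exact hw.1
      · exact ⟨⊥, fun h => absurd h hb⟩
    choose y hy using h0
    refine ⟨sSup (y '' Set.Iio α), fun β hb => ?_⟩
    have hle : ∀ γ δ, γ < δ → δ < α → y γ ≤ y δ := by
      intro γ δ h1 h2
      have hd := h2.trans_le hα
      refine (hy γ (h1.trans hd)).2 _ ?_
      exact etrans γ (h1.trans hd) _ _ _ (hx γ δ h1 h2) (emono γ δ h1.le hd _ _ (hy δ hd).1)
    have hs : sSup (y '' Set.Iio α) = sSup (y '' Set.Ico β α) := by
      apply le_antisymm
      · apply sSup_le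
        rintro _ ⟨γ, hγ, rfl⟩
        rcases lt_or_ge γ β with h | h
        · exact (hle γ β h hb).trans (le_sSup ⟨β, ⟨le_rfl, hb⟩, rfl⟩)
        · exact le_sSup ⟨γ, ⟨h, hγ⟩, rfl⟩
      · exact sSup_le_sSup (Set.image_mono fun γ h => h.2)
    rw [hs]
    have hbk := hb.trans_le hα
    refine ax4 (y '' Set.Ico β α) ⟨y β, β, ⟨le_rfl, hb⟩, rfl⟩ β hbk _ ?_
    rintro _ ⟨γ, ⟨h1, h2⟩, rfl⟩
    have hgk := h2.trans_le hα
    have hg := emono β γ h1 hgk _ _ (hy γ hgk).1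
    rcases h1.eq_or_lt with rfl | h
    · exact hg
    · exact etrans β hbk _ _ _ (hx β γ h h2) hg
  intro X _
  obtain ⟨P, hP⟩ : ∃ P : Ordinal → L → Prop, ∀ β u, P β u ↔
      ((∀ x ∈ X, x ∈ seg sq β u → sq β x u) ∧
        ∀ w ∈ seg sq β u, (∀ x ∈ X, x ∈ seg sq β u → sq β x w) → sq β u w) :=
    ⟨fun β u => ((∀ x ∈ X, x ∈ seg sq β u → sq β x u) ∧
        ∀ w ∈ seg sq β u, (∀ x ∈ X, x ∈ seg sq β u → sq β x w) → sq β u w),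
      fun _ _ => Iff.rfl⟩
  have segeq : ∀ β < κ, ∀ u v, (∀ γ < β, eqa sq γ u v) → seg sq β u = seg sq β v := by
    intro β hb u v h
    ext w
    exact ⟨fun hw γ hγ => etrans γ (hγ.trans hb) _ _ _ (esymm _ _ _ (h γ hγ)) (hw γ hγ),
      fun hw γ hγ => etrans γ (hγ.trans hb) _ _ _ (h γ hγ) (hw γ hγ)⟩
  have Ptr : ∀ β < κ, ∀ u v, eqa sq β u v → P β u → P β v := by
    intro β hb u v h hu
    rw [hP] at hu ⊢
    rw [← segeq β hb u v (fun γ hγ => emono γ β hγ.le hb _ _ h)]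
    exact ⟨fun x hx hxs => htrans β hb _ _ _ (hu.1 x hx hxs) h.1,
      fun w hw hw2 => htrans β hb _ _ _ h.2 (hu.2 w hw hw2)⟩
  have uniq : ∀ u v, ∀ β, β < κ → (∀ γ ≤ β, P γ u) → (∀ γ ≤ β, P γ v) → eqa sq β u v := by
    intro u v β
    induction β using WellFoundedLT.induction with
    | ind β ih =>
      intro hb hu hv
      have hlow : ∀ γ < β, eqa sq γ u v := fun γ hγ =>
        ih γ hγ (hγ.trans hb) (fun δ hδ => hu δ (hδ.trans hγ.le)) (fun δ hδ => hv δ (hδ.trans hγ.le))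
      have hseg := segeq β hb u v hlow
      have h1 := (hP _ _).1 (hu β le_rfl)
      have h2 := (hP _ _).1 (hv β le_rfl)
      rw [← hseg] at h2
      exact ⟨h1.2 v hlow h2.1, h2.2 u (fun γ hγ => erefl γ (hγ.trans hb) _) h1.1⟩
  have exi : ∀ α, α ≤ κ → ∃ u, ∀ β < α, P β u := by
    intro α
    induction α using WellFoundedLT.induction with
    | ind α ih =>
      intro hα
      have step : ∀ β, ∃ v, β < α → ∀ γ ≤ β, P γ v := by
        intro β
        by_cases hb : β < α
        · have hbk := hb.trans_le hα
          obtain ⟨u, hu⟩ := ih β hb hbk.le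
          obtain ⟨y, hy1, hy2, hy3⟩ := ax3 u β hbk (X ∩ seg sq β u) Set.inter_subset_right
          refine ⟨y, fun _ γ hγ => ?_⟩
          rcases hγ.eq_or_lt with rfl | h
          · rw [hP, ← segeq γ hbk u y hy1]
            exact ⟨fun x hx hxs => hy2 x ⟨hx, hxs⟩,
              fun w hw hw2 => (hy3 w hw (fun z hz => hw2 z hz.1 hz.2)).1⟩
          · exact Ptr γ (h.trans hbk) u y (hy1 γ h) (hu γ h)
        · exact ⟨⊥, fun h => absurd h hb⟩
      choose x hx using step
      obtain ⟨u, hu⟩ := glue α hα x (fun β γ h1 h2 =>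
        uniq _ _ β ((h1.trans h2).trans_le hα) (hx β (h1.trans h2))
          (fun δ hδ => hx γ h2 δ (hδ.trans h1.le)))
      exact ⟨u, fun β hb => Ptr β (hb.trans_le hα) _ _ (hu β hb) (hx β hb β le_rfl)⟩
  obtain ⟨s, hs⟩ := exi κ le_rfl
  refine ⟨s, fun x hx => ?_, fun z hz => ?_⟩
  · by_cases h : x = s
    · exact Or.inr h
    obtain ⟨α, h1, h2, h3⟩ := least _ _ h
    exact Or.inl ⟨α, h1, ((hP _ _).1 (hs α h1)).1 x hx (fun γ hγ => esymm _ _ _ (h3 γ hγ)), h2⟩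
  · by_cases h : s = z
    · exact Or.inr h
    obtain ⟨α, h1, h2, h3⟩ := least _ _ h
    refine Or.inl ⟨α, h1, ((hP _ _).1 (hs α h1)).2 z h3 (fun x hx hxs => ?_), h2⟩
    rcases hz x hx with ⟨β, hb, hlt⟩ | rfl
    · rcases lt_trichotomy β α with hba | rfl | hba
      · exact absurd (etrans β hb _ _ _ (esymm _ _ _ (hxs β hba)) (h3 β hba)) hlt.2
      · exact hlt.1
      · exact (ax1 α β hba hb _ _ hlt.1).1
    · exact hrefl α h1 _
end

section
/- Suppose f : L → L is α-monotonic for some α with α+1 < κ. If x ∈ L and x ⊑_α f(x), then there is some y ∈ L with the following properties: (i) x ⊑_α y and y =_α f(y); (ii) for all z ∈ L, if x ⊑_α z and f(z) ⊑_α z, then y ⊑_α z; (iii) y is the ≤-least element of [y]_α, y ⊑_{α+1} w for all w ∈ [y]_α, and y ⊑_{α+1} f(y). -/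
theorem stmt_17
    {L : Type*} [CompleteLattice L] {κ : Ordinal} (hκ : Order.IsSuccLimit κ)
    (sq : Ordinal → L → L → Prop)
    (hrefl : ∀ α < κ, ∀ x : L, sq α x x)
    (htrans : ∀ α < κ, ∀ x y z : L, sq α x y → sq α y z → sq α x z)
    (ax1 : ∀ α β : Ordinal, α < β → β < κ → ∀ x y : L, sq β x y → eqa sq α x y)
    (ax2 : ∀ x y : L, (∀ α < κ, eqa sq α x y) → x = y)
    (ax3 : ∀ x : L, ∀ α < κ, ∀ X ⊆ seg sq α x, ∃ y : L, IsLubA sq α x X y)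
    (ax4 : ∀ X : Set L, X.Nonempty → ∀ α < κ, ∀ y : L,
      (∀ x ∈ X, eqa sq α y x) → eqa sq α y (sSup X))
    {α : Ordinal} (hα : α < κ) (f : L → L)
    (hf : ∀ x y : L, sq α x y → sq α (f x) (f y))
    {x : L} (hx : sq α x (f x)) :
    ∃ y : L, sq α x y ∧ eqa sq α y (f y) ∧
      (∀ z : L, sq α x z → sq α (f z) z → sq α y z) ∧
      (∀ w ∈ segcl sq α y, y ≤ w) ∧
      (∀ w ∈ segcl sq α y, sq (α + 1) y w) ∧
      sq (α + 1) y (f y) := by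
  have hα1 : α + 1 < κ := by
    have := hκ.succ_lt hα
    rwa [Order.succ_eq_add_one] at this
  have hseg : ∀ a b : L, sq α a b → b ∈ seg sq α a :=
    fun a b h β hβ => ax1 β α hβ hα a b h
  obtain ⟨y, hy1, hy2, hy3⟩ := ax3 x α hα
    {w | w ∈ seg sq α x ∧ ∀ z, sq α x z → sq α (f z) z → sq α w z} (fun w hw => hw.1)
  have hxy : sq α x y :=
    hy2 x ⟨hseg x x (hrefl α hα x), fun z h _ => h⟩
  have hyz : ∀ z : L, sq α x z → sq α (f z) z → sq α y z := fun z h1 h2 =>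
    (hy3 z (hseg x z h1) (fun w hw => hw.2 z h1 h2)).1
  have hxfy : sq α x (f y) := htrans α hα _ _ _ hx (hf _ _ hxy)
  have hfy : sq α (f y) y := hy2 (f y) ⟨hseg _ _ hxfy, fun z h1 h2 =>
    htrans α hα _ _ _ (hf _ _ (hyz z h1 h2)) h2⟩
  have hyf : sq α y (f y) := hyz _ hxfy (hf _ _ hfy)
  have hleast : ∀ w ∈ segcl sq α y, y ≤ w := fun w hw =>
    (hy3 w (hseg _ _ (htrans α hα _ _ _ hxy hw.1.1))
      (fun z hz => htrans α hα _ _ _ (hy2 z hz) hw.1.1)).2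
  have hlt : α < α + 1 := by
    rw [← Order.succ_eq_add_one]; exact Order.lt_succ α
  have hsub : ∀ w ∈ segcl sq α y, w ∈ seg sq (α + 1) y := by
    intro w hw β hβ
    rw [← Order.succ_eq_add_one, Order.lt_succ_iff] at hβ
    rcases hβ.lt_or_eq with h | h
    · exact hw.2 β h
    · rw [h]; exact hw.1
  obtain ⟨u, hu1, -, hu3⟩ := ax3 y (α + 1) hα1 ∅ (Set.empty_subset _)
  have hyy : y ∈ segcl sq α y :=
    ⟨⟨hrefl α hα y, hrefl α hα y⟩, hseg _ _ (hrefl α hα y)⟩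
  have huy : u = y := le_antisymm (hu3 y (hsub y hyy) (by simp)).2
    (hleast u ⟨hu1 α hlt, fun β hβ => hu1 β (hβ.trans hlt)⟩)
  subst huy
  have hlast : ∀ w ∈ segcl sq α u, sq (α + 1) u w := fun w hw =>
    (hu3 w (hsub w hw) (by simp)).1
  exact ⟨u, hxy, ⟨hyf, hfy⟩, hyz, hleast, hlast, hlast _ ⟨⟨hyf, hfy⟩, hseg _ _ hyf⟩⟩
end

section
/- Suppose f : L → L is α-monotonic for every ordinal α < κ. Then f has a least pre-fixed point with respect to the partial order ⊑ (i.e., there exists x ∈ L with f(x) ⊑ x such that x ⊑ z for every z with f(z) ⊑ z), and this least pre-fixed point is also the least fixed point of f with respect to ⊑ (i.e., f(x) = x and x ⊑ z for every z with f(z) = z). -/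
theorem stmt_18
    {L : Type*} [CompleteLattice L] {κ : Ordinal} (hκ : Order.IsSuccLimit κ)
    (sq : Ordinal → L → L → Prop)
    (hrefl : ∀ α < κ, ∀ x : L, sq α x x)
    (htrans : ∀ α < κ, ∀ x y z : L, sq α x y → sq α y z → sq α x z)
    (ax1 : ∀ α β : Ordinal, α < β → β < κ → ∀ x y : L, sq β x y → eqa sq α x y)
    (ax2 : ∀ x y : L, (∀ α < κ, eqa sq α x y) → x = y)
    (ax3 : ∀ x : L, ∀ α < κ, ∀ X ⊆ seg sq α x, ∃ y : L, IsLubA sq α x X y)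
    (ax4 : ∀ X : Set L, X.Nonempty → ∀ α < κ, ∀ y : L,
      (∀ x ∈ X, eqa sq α y x) → eqa sq α y (sSup X))
    (f : L → L)
    (hf : ∀ α < κ, ∀ x y : L, sq α x y → sq α (f x) (f y)) :
    ∃ x : L, sqle sq κ (f x) x ∧
      (∀ z : L, sqle sq κ (f z) z → sqle sq κ x z) ∧
      f x = x ∧ (∀ z : L, f z = z → sqle sq κ x z) := by
  have esymm : ∀ α x y, eqa sq α x y → eqa sq α y x := fun α x y h => ⟨h.2, h.1⟩
  have etrans : ∀ α < κ, ∀ x y z, eqa sq α x y → eqa sq α y z → eqa sq α x z :=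
    fun α hα x y z h h' => ⟨htrans α hα _ _ _ h.1 h'.1, htrans α hα _ _ _ h'.2 h.2⟩
  have elow : ∀ α < κ, ∀ β ≤ α, ∀ x y, eqa sq α x y → eqa sq β x y := by
    intro α hα β hβ x y h
    rcases hβ.lt_or_eq with h' | rfl
    · exact ax1 _ _ h' hα _ _ h.1
    · exact h
  have hfe : ∀ α < κ, ∀ x y, eqa sq α x y → eqa sq α (f x) (f y) :=
    fun α hα x y h => ⟨hf α hα _ _ h.1, hf α hα _ _ h.2⟩
  let Good : Ordinal → L → Prop := fun β x =>
    eqa sq β (f x) x ∧ ∀ z ∈ seg sq β x, sq β (f z) z → sq β x z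
  have ginv : ∀ β < κ, ∀ x y, eqa sq β x y → Good β x → Good β y := by
    intro β hβ x y h hx
    refine ⟨etrans β hβ _ _ _ (hfe β hβ _ _ (esymm _ _ _ h)) (etrans β hβ _ _ _ hx.1 h), ?_⟩
    intro z hz hz'
    refine htrans β hβ _ _ _ h.2 (hx.2 z ?_ hz')
    intro γ hγ
    exact etrans γ (hγ.trans hβ) _ _ _ (elow β hβ γ hγ.le _ _ h) (hz γ hγ)
  have guniq : ∀ x y β, β < κ → (∀ γ ≤ β, Good γ x) → (∀ γ ≤ β, Good γ y) →
      eqa sq β x y := by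
    intro x y β
    induction β using WellFoundedLT.induction with
    | ind β ih =>
      intro hβ hx hy
      have h : ∀ γ < β, eqa sq γ x y := fun γ hγ => ih γ hγ (hγ.trans hβ)
        (fun δ hδ => hx δ (hδ.trans hγ.le)) (fun δ hδ => hy δ (hδ.trans hγ.le))
      exact ⟨(hx β le_rfl).2 y h (hy β le_rfl).1.1,
        (hy β le_rfl).2 x (fun γ hγ => esymm _ _ _ (h γ hγ)) (hx β le_rfl).1.1⟩
  have canon : ∀ β < κ, ∀ x, ∃ m, eqa sq β x m ∧ ∀ w, eqa sq β x w → m ≤ w := by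
    intro β hβ x
    have hxx : x ∈ seg sq β x := fun γ hγ => ⟨hrefl γ (hγ.trans hβ) x, hrefl γ (hγ.trans hβ) x⟩
    obtain ⟨m, hm1, hm2, hm3⟩ := ax3 x β hβ {x} (by rintro _ rfl; exact hxx)
    refine ⟨m, ⟨hm2 x rfl, (hm3 x hxx (by rintro _ rfl; exact hrefl β hβ _)).1⟩, ?_⟩
    intro w hw
    exact (hm3 w (fun γ hγ => elow β hβ γ hγ.le _ _ hw) (by rintro _ rfl; exact hw.1)).2
  have glue : ∀ α ≤ κ, (∀ β < α, ∃ x, ∀ γ ≤ β, Good γ x) → ∃ y, ∀ β < α, Good β y := by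
    intro α hα h
    have h2 : ∀ β : Ordinal, ∃ x, β < α →
        (∀ γ ≤ β, Good γ x) ∧ ∀ w, eqa sq β x w → x ≤ w := by
      intro β
      by_cases hβ : β < α
      · obtain ⟨x, hx⟩ := h β hβ
        have hβκ := hβ.trans_le hα
        obtain ⟨m, hm, hm'⟩ := canon β hβκ x
        refine ⟨m, fun _ => ⟨fun γ hγ => ginv γ (hγ.trans_lt hβκ) x m
          (elow β hβκ γ hγ _ _ hm) (hx γ hγ), fun w hw => hm' w (etrans β hβκ _ _ _ hm hw)⟩⟩
      · exact ⟨⊥, fun h => absurd h hβ⟩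
    choose x hx using h2
    have hcomp : ∀ β γ, β ≤ γ → γ < α → eqa sq β (x β) (x γ) := by
      intro β γ hβγ hγ
      have hβ := hβγ.trans_lt hγ
      exact guniq _ _ β (hβ.trans_le hα) (hx β hβ).1
        (fun δ hδ => (hx γ hγ).1 δ (hδ.trans hβγ))
    refine ⟨sSup (Set.image x {γ | γ < α}), fun β hβ => ?_⟩
    have hT : sSup (Set.image x {γ | γ < α}) = sSup (Set.image x {γ | β ≤ γ ∧ γ < α}) := by
      apply le_antisymm
      · apply sSup_le
        rintro _ ⟨γ, hγ, rfl⟩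
        rcases le_total β γ with h1 | h1
        · exact le_sSup ⟨γ, ⟨h1, hγ⟩, rfl⟩
        · exact ((hx γ hγ).2 _ (hcomp γ β h1 hβ)).trans (le_sSup ⟨β, ⟨le_rfl, hβ⟩, rfl⟩)
      · apply sSup_le_sSup
        rintro _ ⟨γ, hγ, rfl⟩
        exact ⟨γ, hγ.2, rfl⟩
    have hβκ := hβ.trans_le hα
    rw [hT]
    refine ginv β hβκ (x β) _ (ax4 (Set.image x {γ | β ≤ γ ∧ γ < α}) ⟨x β, β, ⟨le_rfl, hβ⟩, rfl⟩ β hβκ _ ?_)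
      ((hx β hβ).1 β le_rfl)
    rintro _ ⟨γ, hγ, rfl⟩
    exact hcomp β γ hγ.1 hγ.2
  have step : ∀ α < κ, ∀ y, (∀ β < α, Good β y) → ∃ x, ∀ β ≤ α, Good β x := by
    intro α hα y hy
    have hfseg : ∀ w ∈ seg sq α y, f w ∈ seg sq α y := fun w hw β hβ =>
      etrans β (hβ.trans hα) _ _ _ (esymm _ _ _ (hy β hβ).1) (hfe β (hβ.trans hα) _ _ (hw β hβ))
    obtain ⟨x, hx1, hx2, hx3⟩ := ax3 y α hα
      {w | w ∈ seg sq α y ∧ ∀ z ∈ seg sq α y, sq α (f z) z → sq α w z} (fun w hw => hw.1)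
    have hmin : ∀ z ∈ seg sq α y, sq α (f z) z → sq α x z := fun z hz hz' =>
      (hx3 z hz (fun w hw => hw.2 z hz hz')).1
    have hpre : sq α (f x) x := hx2 _ ⟨hfseg x hx1, fun z hz hz' =>
      htrans α hα _ _ _ (hf α hα _ _ (hmin z hz hz')) hz'⟩
    have hpost : sq α x (f x) := hmin _ (hfseg x hx1) (hf α hα _ _ hpre)
    refine ⟨x, fun β hβ => ?_⟩
    rcases hβ.lt_or_eq with h | rfl
    · exact ginv β (h.trans hα) y x (hx1 β h) (hy β h)
    · exact ⟨⟨hpre, hpost⟩, fun z hz hz' => hmin z (fun γ hγ =>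
        etrans γ (hγ.trans hα) _ _ _ (hx1 γ hγ) (hz γ hγ)) hz'⟩
  have all : ∀ α < κ, ∃ x, ∀ β ≤ α, Good β x := by
    intro α
    induction α using WellFoundedLT.induction with
    | ind α ih =>
      intro hα
      obtain ⟨y, hy⟩ := glue α hα.le (fun β hβ => ih β hβ (hβ.trans hα))
      exact step α hα y hy
  obtain ⟨x, hx⟩ := glue κ le_rfl all
  have hfix : f x = x := ax2 _ _ (fun α hα => (hx α hα).1)
  have hleast : ∀ z : L, sqle sq κ (f z) z → sqle sq κ x z := by
    intro z hz
    by_cases hxz : x = z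
    · exact Or.inr hxz
    left
    have hne : ∃ α, α < κ ∧ ¬ eqa sq α x z := by
      by_contra hcon
      push Not at hcon
      exact hxz (ax2 _ _ hcon)
    obtain ⟨α, ⟨hα, hnα⟩, hmin⟩ := WellFounded.has_min (wellFounded_lt (α := Ordinal))
      {α | α < κ ∧ ¬ eqa sq α x z} hne
    have hlow : ∀ β < α, eqa sq β x z := by
      intro β hβ
      by_contra hcon
      exact hmin β ⟨hβ.trans hα, hcon⟩ hβ
    refine ⟨α, hα, (hx α hα).2 z hlow ?_, hnα⟩
    rcases hz with ⟨γ, hγ, hlt⟩ | heq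
    · rcases lt_trichotomy α γ with h | rfl | h
      · exact (ax1 _ _ h hγ _ _ hlt.1).1
      · exact hlt.1
      · exfalso
        apply hlt.2
        have h1 := hfe γ hγ _ _ (hlow γ h)
        rw [hfix] at h1
        exact etrans γ hγ _ _ _ (esymm _ _ _ h1) (hlow γ h)
    · rw [heq]
      exact hrefl α hα z
  exact ⟨x, Or.inr hfix, hleast, hfix, fun z hz => hleast z (Or.inr hz)⟩
end
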